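/- Let p be a prime and let (λ_1, ..., λ_k) be a partition of f with λ_1 ≥ ... ≥ λ_k, and suppose n ≥ f + 2λ_1. Then for every positive integer c, the number of isomorphism classes of nilpotent Lie rings L of order p^n such that L has nilpotency class exactly c, μ_2(L) = λ_1, and Ω_{μ_2(L)}(L) has type invariants (λ_1, λ_1, λ_2, ..., λ_k), is independent of n; that is, for all n, n' ≥ f + 2λ_1 these counts are equal. -/

import Mathlib

/-- The lower central series of a Lie ring, as additive subgroups. -/
def lieLCS (L : Type) [LieRing L] : ℕ → AddSubgroup L
  | 0 => ⊤
  | (k + 1) => AddSubgroup.closure {x : L | ∃ y ∈ lieLCS L k, ∃ z : L, x = ⁅y, z⁆}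

/-- A Lie ring is nilpotent if its lower central series reaches `⊥`. -/
def IsNilpotentLieRing (L : Type) [LieRing L] : Prop :=
  ∃ c : ℕ, lieLCS L c = ⊥

/-- The nilpotency class of a Lie ring: the least `c` with `lieLCS L c = ⊥`. -/
noncomputable def lieNilClass (L : Type) [LieRing L] : ℕ :=
  sInf {c : ℕ | lieLCS L c = ⊥}

/-- `Ω_i(A) = {x : p^i • x = 0}` for an additive group `A`. -/
def aOmega (p : ℕ) (A : Type) [AddCommGroup A] (i : ℕ) : AddSubgroup A :=
  AddSubgroup.closure {x : A | p ^ i • x = 0}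

/-- `ω_i(A)`, defined by `p ^ ω_i(A) = |Ω_i(A)/Ω_{i-1}(A)|`. -/
noncomputable def aOmegaInv (p : ℕ) (A : Type) [AddCommGroup A] (i : ℕ) : ℕ :=
  ((aOmega p A (i - 1)).relIndex (aOmega p A i)).factorization p

/-- `μ_j(A)` (for `j ≥ 1`): the dual partition of `(ω_1(A), ω_2(A), ...)`;
these are the type invariants of the abelian `p`-group `A`. -/
noncomputable def aMuInv (p : ℕ) (A : Type) [AddCommGroup A] (j : ℕ) : ℕ :=
  Nat.card {i : ℕ // 1 ≤ i ∧ j ≤ aOmegaInv p A i}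

/-- `A` has type invariants given by the list `l`. -/
def aHasType (p : ℕ) (A : Type) [AddCommGroup A] (l : List ℕ) : Prop :=
  ∀ i : ℕ, aMuInv p A (i + 1) = l.getD i 0

/-- The addition extracted from a Lie ring structure. -/
def addOfLieRing (G : Type) (s : LieRing G) : Add G := by letI := s; infer_instance

/-- The bracket extracted from a Lie ring structure. -/
def bracketOfLieRing (G : Type) (s : LieRing G) : Bracket G G := by letI := s; infer_instance

/-- The number of isomorphism classes of Lie rings with `N` elements whose Lie ring
structure satisfies the predicate `Q`. -/
noncomputable def lieClassCount (N : ℕ) (Q : LieRing (Fin N) → Prop) : ℕ :=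
  Nat.card (Quot fun s t : {s : LieRing (Fin N) // Q s} =>
    ∃ e : @AddEquiv (Fin N) (Fin N) (addOfLieRing _ s.1) (addOfLieRing _ t.1),
      ∀ x y : Fin N,
        e (@Bracket.bracket _ _ (bracketOfLieRing _ s.1) x y) =
          @Bracket.bracket _ _ (bracketOfLieRing _ t.1) (e x) (e y))

/-- The number of isomorphism classes of nilpotent Lie rings `L` of order `p ^ n` with
nilpotency class exactly `c`, `μ_2(L) = λ₁`, and such that `Ω_{μ_2(L)}(L)` has type
invariants `(λ₁, λ₁, λ₂, ..., λ_k)`. -/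
noncomputable def stmt12Count (p n c lam1 : ℕ) (rest : List ℕ) : ℕ :=
  lieClassCount (p ^ n) fun s =>
    letI := s
    IsNilpotentLieRing (Fin (p ^ n)) ∧ lieNilClass (Fin (p ^ n)) = c ∧
      aMuInv p (Fin (p ^ n)) 2 = lam1 ∧
      aHasType p (↥(aOmega p (Fin (p ^ n)) (aMuInv p (Fin (p ^ n)) 2)))
        (lam1 :: lam1 :: rest)

/-!
Write `l = λ₁`. The conditions on `L` force its additive group to be `ℤ/p^m × B` with `|B| = p^f`,
`B` of exponent `p^l`, and `m = n - f ≥ 2l`. Since the bracket is alternating and `p^l` kills `B`,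
the bracket vanishes on `p^l L` and takes values in `Ω_l(L)`, so it is a pairing
`L/p^l L × L/p^l L → Ω_l(L)`. Both of these groups are `ℤ/p^l × B`, whatever `m` is, and because
`m ≥ 2l` so is the natural map `Ω_l(L) → L/p^l L`, namely `(s, b) ↦ (0, b)`. This map and the
pairing determine the Jacobi identity and the nilpotency class, so each pairing gives a Lie ring for
every `m ≥ 2l`. An isomorphism between two such groups for one value of `m` can be replaced by one
for any other value inducing the same maps on `L/p^l L` and `Ω_l(L)`, hence the isomorphism classes
agree.
-/

lemma card_quot_eq_of_correspondence {α β : Type*} {r : α → α → Prop} {s : β → β → Prop}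
    (R : α → β → Prop) (hr : ∀ a, r a a) (hs : ∀ b, s b b) (hα : ∀ a, ∃ b, R a b)
    (hβ : ∀ b, ∃ a, R a b) (hrs : ∀ {a a' b b'}, R a b → R a' b' → (r a a' ↔ s b b')) :
    Nat.card (Quot r) = Nat.card (Quot s) := by
  choose f hf using hα
  choose g hg using hβ
  refine Nat.card_congr
    ⟨Quot.map f fun a a' h => (hrs (hf a) (hf a')).1 h,
      Quot.map g fun b b' h => (hrs (hg b) (hg b')).2 h, ?_, ?_⟩
  · rintro ⟨a⟩
    exact Quot.sound ((hrs (hg (f a)) (hf a)).2 (hs _))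
  · rintro ⟨b⟩
    exact Quot.sound ((hrs (hf (g b)) (hg b)).1 (hr _))

section TorsionFiltration

variable {p : ℕ} {A B : Type} [AddCommGroup A] [AddCommGroup B]

lemma mem_aOmega {i : ℕ} {x : A} : x ∈ aOmega p A i ↔ p ^ i • x = 0 := by
  have h : aOmega p A i = (nsmulAddMonoidHom (p ^ i) : A →+ A).ker :=
    AddSubgroup.closure_eq (nsmulAddMonoidHom (p ^ i) : A →+ A).ker
  rw [h, AddMonoidHom.mem_ker, nsmulAddMonoidHom_apply]

lemma aOmega_mono : Monotone (aOmega p A) := by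
  intro i j hij x hx
  rw [mem_aOmega] at hx ⊢
  rw [← Nat.sub_add_cancel hij, pow_add, mul_smul, hx, smul_zero]

lemma aOmega_eq_top_iff {i : ℕ} : aOmega p A i = ⊤ ↔ AddMonoid.exponent A ∣ p ^ i := by
  simp only [AddMonoid.exponent_dvd_iff_forall_nsmul_eq_zero, AddSubgroup.eq_top_iff', mem_aOmega]

/-- The logarithm to base `p` of `|Ω_i(A)|`, for a finite abelian `p`-group `A`. -/
noncomputable def omegaLog (p : ℕ) (A : Type) [AddCommGroup A] (i : ℕ) : ℕ :=
  (Nat.card (aOmega p A i)).factorization p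

lemma omegaLog_eq_add [Finite A] (i : ℕ) :
    omegaLog p A i = omegaLog p A (i - 1) + aOmegaInv p A i := by
  have hmul := AddSubgroup.relIndex_mul_relIndex ⊥ _ _ bot_le
    (aOmega_mono (p := p) (A := A) (Nat.sub_le i 1))
  rw [AddSubgroup.relIndex_bot_left, AddSubgroup.relIndex_bot_left] at hmul
  have hne : Nat.card (aOmega p A i) ≠ 0 := Nat.card_pos.ne'
  rw [← hmul] at hne
  rw [omegaLog, ← hmul, Nat.factorization_mul (left_ne_zero_of_mul hne) (right_ne_zero_of_mul hne)]
  rfl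

lemma omegaLog_eq_sum [Finite A] (k : ℕ) :
    omegaLog p A k = ∑ i ∈ Finset.Icc 1 k, aOmegaInv p A i := by
  induction k with
  | zero =>
    have h : aOmega p A 0 = ⊥ := by ext x; simp [mem_aOmega]
    simp [omegaLog, h]
  | succ k ih => rw [Finset.sum_Icc_succ_top (by omega), ← ih, omegaLog_eq_add, Nat.add_sub_cancel]

lemma omegaLog_congr (e : A ≃+ B) (i : ℕ) : omegaLog p A i = omegaLog p B i := by
  have he : ∀ a, a ∈ aOmega p A i ↔ e a ∈ aOmega p B i := fun a => by
    rw [mem_aOmega, mem_aOmega, ← map_nsmul, EmbeddingLike.map_eq_zero_iff]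
  rw [omegaLog, omegaLog, Nat.card_congr (e.toEquiv.subtypeEquiv he)]

lemma omegaLog_prod [Finite A] [Finite B] (i : ℕ) :
    omegaLog p (A × B) i = omegaLog p A i + omegaLog p B i := by
  have h : aOmega p (A × B) i = (aOmega p A i).prod (aOmega p B i) := by
    ext ⟨a, b⟩
    simp only [AddSubgroup.mem_prod, mem_aOmega, Prod.smul_mk, Prod.mk_eq_zero]
  rw [omegaLog, h, Nat.card_congr (AddSubgroup.prodEquiv _ _).toEquiv, Nat.card_prod,
    Nat.factorization_mul Nat.card_pos.ne' Nat.card_pos.ne']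
  rfl

lemma omegaLog_zmod [Fact p.Prime] (m i : ℕ) : omegaLog p (ZMod (p ^ m)) i = min m i := by
  have hker : aOmega p (ZMod (p ^ m)) i = (nsmulAddMonoidHom (p ^ i)).ker := by
    ext x
    rw [mem_aOmega, AddMonoidHom.mem_ker, nsmulAddMonoidHom_apply]
  have hgcd : (p ^ m).gcd (p ^ i) = p ^ min m i := by
    rcases le_total m i with h | h
    · rw [min_eq_left h, Nat.gcd_eq_left (pow_dvd_pow p h)]
    · rw [min_eq_right h, Nat.gcd_eq_right (pow_dvd_pow p h)]
  rw [omegaLog, hker, IsAddCyclic.card_nsmulAddMonoidHom_ker, Nat.card_zmod, hgcd,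
    (Fact.out : p.Prime).factorization_pow, Finsupp.single_eq_same]

lemma aOmegaInv_congr [Finite A] (e : A ≃+ B) (i : ℕ) : aOmegaInv p A i = aOmegaInv p B i := by
  have : Finite B := Finite.of_equiv A e.toEquiv
  have hA := omegaLog_eq_add (p := p) (A := A) i
  have hB := omegaLog_eq_add (p := p) (A := B) i
  rw [omegaLog_congr e, omegaLog_congr e] at hA
  omega

lemma aOmegaInv_prod [Finite A] [Finite B] (i : ℕ) :
    aOmegaInv p (A × B) i = aOmegaInv p A i + aOmegaInv p B i := by
  have hA := omegaLog_eq_add (p := p) (A := A) i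
  have hB := omegaLog_eq_add (p := p) (A := B) i
  have hAB := omegaLog_eq_add (p := p) (A := A × B) i
  rw [omegaLog_prod, omegaLog_prod] at hAB
  omega

lemma aOmegaInv_zmod [Fact p.Prime] (m : ℕ) {i : ℕ} (hi : 1 ≤ i) :
    aOmegaInv p (ZMod (p ^ m)) i = if i ≤ m then 1 else 0 := by
  have h := omegaLog_eq_add (p := p) (A := ZMod (p ^ m)) i
  rw [omegaLog_zmod, omegaLog_zmod] at h
  split_ifs <;> omega

lemma aOmegaInv_pos_iff_not_le [Fact p.Prime] {n : ℕ} (hA : Nat.card A = p ^ n) {i : ℕ} :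
    0 < aOmegaInv p A i ↔ ¬ aOmega p A i ≤ aOmega p A (i - 1) := by
  have hp : p.Prime := Fact.out
  have hdvd : (aOmega p A (i - 1)).relIndex (aOmega p A i) ∣ p ^ n :=
    hA ▸ (AddSubgroup.relIndex_dvd_card _ _).trans (AddSubgroup.card_addSubgroup_dvd_card _)
  obtain ⟨k, -, hk⟩ := (Nat.dvd_prime_pow hp).1 hdvd
  rw [← AddSubgroup.relIndex_eq_one, aOmegaInv, hk, hp.factorization_pow, Finsupp.single_eq_same,
    Nat.pow_eq_one]
  have := hp.ne_one
  omega

lemma aOmegaInv_pos_iff [Fact p.Prime] {n k : ℕ} (hA : Nat.card A = p ^ n)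
    (hexp : AddMonoid.exponent A = p ^ k) {i : ℕ} (hi : 1 ≤ i) :
    0 < aOmegaInv p A i ↔ i ≤ k := by
  rw [aOmegaInv_pos_iff_not_le hA]
  refine ⟨fun hlt => ?_, fun hik hle => ?_⟩
  · by_contra! hki
    have htop : aOmega p A (i - 1) = ⊤ :=
      aOmega_eq_top_iff.2 (hexp ▸ pow_dvd_pow p (Nat.le_sub_one_of_lt hki))
    exact hlt (htop ▸ le_top)
  · have hkill : AddMonoid.exponent A ∣ p ^ (k - 1) := by
      rw [AddMonoid.exponent_dvd_iff_forall_nsmul_eq_zero]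
      intro a
      have ha : p ^ (k - i) • a ∈ aOmega p A i := by
        rw [mem_aOmega, ← mul_smul, ← pow_add, Nat.add_sub_cancel' hik, ← hexp,
          AddMonoid.exponent_nsmul_eq_zero]
      have ha' := mem_aOmega.1 (hle ha)
      rwa [← mul_smul, ← pow_add, show i - 1 + (k - i) = k - 1 by omega] at ha'
    rw [hexp, Nat.pow_dvd_pow_iff_le_right (Fact.out : p.Prime).one_lt] at hkill
    omega

lemma aMuInv_congr [Finite A] (e : A ≃+ B) (j : ℕ) : aMuInv p A j = aMuInv p B j := by
  simp only [aMuInv, aOmegaInv_congr e]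

lemma aHasType_congr [Finite A] (e : A ≃+ B) (ls : List ℕ) :
    aHasType p A ls ↔ aHasType p B ls := by
  simp only [aHasType, aMuInv_congr e]

lemma aMuInv_eq_card_filter [Finite A] {k j : ℕ} (hk : AddMonoid.exponent A ∣ p ^ k)
    (hj : 0 < j) : aMuInv p A j = ((Finset.Icc 1 k).filter (j ≤ aOmegaInv p A ·)).card := by
  have hzero : ∀ i, k < i → aOmegaInv p A i = 0 := fun i hi => by
    have htop : ∀ j, k ≤ j → aOmega p A j = ⊤ := fun j hj =>
      aOmega_eq_top_iff.2 (hk.trans (pow_dvd_pow p hj))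
    rw [aOmegaInv, htop i hi.le, htop (i - 1) (by omega), AddSubgroup.relIndex_self]
    simp
  have hmem : ∀ i, (1 ≤ i ∧ j ≤ aOmegaInv p A i) ↔
      i ∈ (Finset.Icc 1 k).filter (j ≤ aOmegaInv p A ·) := fun i => by
    rw [Finset.mem_filter, Finset.mem_Icc]
    have := hzero i
    grind
  rw [aMuInv, Nat.card_congr (Equiv.subtypeEquivRight hmem), Nat.card_eq_fintype_card,
    Fintype.card_coe]

lemma sum_range_aMuInv [Finite A] {k r : ℕ} (hk : AddMonoid.exponent A ∣ p ^ k)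
    (hr : ∀ i ∈ Finset.Icc 1 k, aOmegaInv p A i ≤ r) :
    ∑ j ∈ Finset.range r, aMuInv p A (j + 1) = omegaLog p A k := by
  have hfilter : ∀ i ∈ Finset.Icc 1 k,
      (Finset.range r).filter (· + 1 ≤ aOmegaInv p A i) = Finset.range (aOmegaInv p A i) := by
    intro i hi
    ext j
    have := hr i hi
    simp only [Finset.mem_filter, Finset.mem_range]
    omega
  calc ∑ j ∈ Finset.range r, aMuInv p A (j + 1)
      = ∑ j ∈ Finset.range r, ((Finset.Icc 1 k).filter (j + 1 ≤ aOmegaInv p A ·)).card :=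
        Finset.sum_congr rfl fun j _ => aMuInv_eq_card_filter hk j.succ_pos
    _ = ∑ i ∈ Finset.Icc 1 k, ((Finset.range r).filter (· + 1 ≤ aOmegaInv p A i)).card :=
        Finset.sum_card_bipartiteAbove_eq_sum_card_bipartiteBelow _
    _ = ∑ i ∈ Finset.Icc 1 k, aOmegaInv p A i :=
        Finset.sum_congr rfl fun i hi => by rw [hfilter i hi, Finset.card_range]
    _ = omegaLog p A k := (omegaLog_eq_sum k).symm

lemma sum_eq_of_aHasType [Fact p.Prime] {n : ℕ} (hA : Nat.card A = p ^ n) {ls : List ℕ}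
    (h : aHasType p A ls) : ls.sum = n := by
  have hp : p.Prime := Fact.out
  have : Finite A := Nat.finite_of_card_ne_zero (hA ▸ (pow_pos hp.pos n).ne')
  have hexp : AddMonoid.exponent A ∣ p ^ n := hA ▸ AddGroup.exponent_dvd_nat_card
  have hlen : ∀ i ∈ Finset.Icc 1 n, aOmegaInv p A i ≤ ls.length := by
    have hempty := h ls.length
    rw [List.getD_eq_default _ _ le_rfl, aMuInv_eq_card_filter hexp (Nat.succ_pos _),
      Finset.card_eq_zero, Finset.filter_eq_empty_iff] at hempty
    exact fun i hi => Nat.lt_succ_iff.1 (not_le.1 (hempty hi))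
  calc ls.sum = ∑ j ∈ Finset.range ls.length, ls.getD j 0 := by
        rw [Finset.sum_range, ← Fin.sum_univ_getElem]
        simp
    _ = ∑ j ∈ Finset.range ls.length, aMuInv p A (j + 1) :=
        Finset.sum_congr rfl fun j _ => (h j).symm
    _ = omegaLog p A n := sum_range_aMuInv hexp hlen
    _ = n := by
        rw [omegaLog, aOmega_eq_top_iff.2 hexp, AddSubgroup.card_top, hA, hp.factorization_pow,
          Finsupp.single_eq_same]

lemma aMuInv_two_zmod_prod [Fact p.Prime] {m n k : ℕ} (hB : Nat.card B = p ^ n)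
    (hexp : AddMonoid.exponent B = p ^ k) (hkm : k ≤ m) : aMuInv p (ZMod (p ^ m) × B) 2 = k := by
  have : NeZero (p ^ m) := ⟨(pow_pos (Fact.out : p.Prime).pos m).ne'⟩
  have : Finite B := Nat.finite_of_card_ne_zero (hB ▸ (pow_pos (Fact.out : p.Prime).pos n).ne')
  have hmem : ∀ i,
      (1 ≤ i ∧ 2 ≤ aOmegaInv p (ZMod (p ^ m) × B) i) ↔ i ∈ Finset.Icc 1 k := fun i => by
    rw [Finset.mem_Icc]
    refine and_congr_right fun hi => ?_
    have hpos := aOmegaInv_pos_iff hB hexp hi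
    rw [aOmegaInv_prod, aOmegaInv_zmod m hi]
    split_ifs <;> omega
  rw [aMuInv, Nat.card_congr (Equiv.subtypeEquivRight hmem), Nat.card_eq_fintype_card,
    Fintype.card_coe, Nat.card_Icc, Nat.add_sub_cancel]

end TorsionFiltration

section CyclicSummand

lemma zmod_prod_hom_ext {n : ℕ} {B D : Type*} [AddCommGroup B] [AddCommGroup D]
    {f g : ZMod n × B →+ D} (h₁ : f (1, 0) = g (1, 0)) (h₂ : ∀ b, f (0, b) = g (0, b)) : f = g := by
  ext ⟨s, b⟩
  obtain ⟨z, rfl⟩ := ZMod.intCast_surjective s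
  have hsplit : ((z : ZMod n), b) = z • (1, 0) + (0, b) := by simp
  rw [hsplit, map_add, map_add, map_zsmul, map_zsmul, h₁, h₂]

lemma exists_zmod_prod_hom {n : ℕ} {B D : Type*} [AddCommGroup B] [AddCommGroup D] {a : D}
    (ha : n • a = 0) (g : B →+ D) : ∃ f : ZMod n × B →+ D, f (1, 0) = a ∧ ∀ b, f (0, b) = g b := by
  let f₁ : ZMod n →+ D := ZMod.lift n ⟨zmultiplesHom D a, by simpa using ha⟩
  have hf₁ : f₁ 1 = a := by
    rw [← Int.cast_one, ZMod.lift_coe]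
    simp
  exact ⟨f₁.coprod g, by simp [hf₁], by simp⟩

lemma injective_of_ker_torsion_trivial {A A' : Type*} [AddCommGroup A] [AddCommGroup A']
    (f : A →+ A') (q : ℕ) (htors : ∀ x : A, ∃ k, q ^ k • x = 0)
    (hker : ∀ x : A, q • x = 0 → f x = 0 → x = 0) : Function.Injective f := by
  rw [injective_iff_map_eq_zero]
  intro x hx
  obtain ⟨k, hk⟩ := htors x
  induction k generalizing x with
  | zero => simpa using hk
  | succ k ih =>
    have hqx : q • x = 0 :=
      ih (q • x) (by rw [map_nsmul, hx, smul_zero]) (by rw [← mul_smul, ← pow_succ, hk])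
    exact hker x hqx hx

variable (q d : ℕ) (B : Type*) [AddCommGroup B]

/-- Reduction `ℤ/qd × B → ℤ/q × B`; if `q` kills `B`, this is the quotient map of
`A = ℤ/qd × B` onto `A/qA`. -/
def zmodProdRed : ZMod (q * d) × B →+ ZMod q × B :=
  (ZMod.castHom (Dvd.intro d rfl) (ZMod q)).toAddMonoidHom.prodMap (AddMonoidHom.id B)

/-- The map `ℤ/q × B → ℤ/qd × B` multiplying the first component by `d`; if `q` kills `B`, this is
the inclusion of the `q`-torsion of `ℤ/qd × B`. -/
def zmodProdIncl : ZMod q × B →+ ZMod (q * d) × B :=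
  AddMonoidHom.prodMap
    (ZMod.lift q ⟨(Int.castAddHom (ZMod (q * d))).comp (AddMonoidHom.mulRight (d : ℤ)), by
      change (((q : ℤ) * (d : ℤ) : ℤ) : ZMod (q * d)) = 0
      exact_mod_cast ZMod.natCast_self (q * d)⟩)
    (AddMonoidHom.id B)

variable {q d B}

lemma zmodProdRed_intCast (z : ℤ) (b : B) :
    zmodProdRed q d B ((z : ZMod (q * d)), b) = ((z : ZMod q), b) := by
  simp [zmodProdRed]

lemma zmodProdIncl_intCast (z : ℤ) (b : B) :
    zmodProdIncl q d B ((z : ZMod q), b) = (((z * d : ℤ) : ZMod (q * d)), b) := by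
  simp [zmodProdIncl]

lemma zmodProdRed_one_zero : zmodProdRed q d B (1, 0) = (1, 0) := by
  simpa using zmodProdRed_intCast (q := q) (d := d) 1 (0 : B)

lemma zmodProdRed_zero_left (b : B) : zmodProdRed q d B (0, b) = (0, b) := by
  simpa using zmodProdRed_intCast (q := q) (d := d) 0 b

lemma zmodProdIncl_zero_left (b : B) : zmodProdIncl q d B (0, b) = (0, b) := by
  simpa using zmodProdIncl_intCast (q := q) (d := d) 0 b

lemma zmodProdIncl_intCast_zero (z : ℤ) :
    zmodProdIncl q d B ((z : ZMod q), 0) = d • ((z : ZMod (q * d)), 0) := by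
  rw [zmodProdIncl_intCast, Prod.smul_mk, smul_zero, nsmul_eq_mul, Int.cast_mul,
    Int.cast_natCast, mul_comm (z : ZMod (q * d))]

lemma zmodProdIncl_one_zero : zmodProdIncl q d B (1, 0) = d • (1, 0) := by
  simpa using zmodProdIncl_intCast_zero (q := q) (d := d) (B := B) 1

lemma nsmul_intCast_mk (hqd : q ∣ d) {b : B} (hb : q • b = 0) (z : ℤ) :
    d • ((z : ZMod (q * d)), b) = zmodProdIncl q d B ((z : ZMod q), 0) := by
  obtain ⟨k, rfl⟩ := hqd
  rw [zmodProdIncl_intCast_zero, Prod.smul_mk, Prod.smul_mk, smul_zero, mul_comm q k,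
    mul_smul k q b, hb, smul_zero]

lemma zmodProdRed_surjective : Function.Surjective (zmodProdRed q d B) := by
  rintro ⟨s, b⟩
  obtain ⟨z, rfl⟩ := ZMod.intCast_surjective s
  exact ⟨((z : ZMod (q * d)), b), zmodProdRed_intCast z b⟩

lemma exists_nsmul_of_zmodProdRed_eq_zero {x : ZMod (q * d) × B} (hx : zmodProdRed q d B x = 0) :
    ∃ y, x = q • y := by
  obtain ⟨s, b⟩ := x
  obtain ⟨z, rfl⟩ := ZMod.intCast_surjective s
  rw [zmodProdRed_intCast, Prod.mk_eq_zero, ZMod.intCast_zmod_eq_zero_iff_dvd] at hx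
  obtain ⟨⟨w, rfl⟩, rfl⟩ := hx
  exact ⟨((w : ZMod (q * d)), 0), by simp⟩

lemma zmodProdIncl_injective [NeZero d] : Function.Injective (zmodProdIncl q d B) := by
  rw [injective_iff_map_eq_zero]
  rintro ⟨s, b⟩ hs
  obtain ⟨z, rfl⟩ := ZMod.intCast_surjective s
  rw [zmodProdIncl_intCast, Prod.mk_eq_zero, ZMod.intCast_zmod_eq_zero_iff_dvd, Nat.cast_mul] at hs
  have hd : (d : ℤ) ≠ 0 := Nat.cast_ne_zero.2 (NeZero.ne d)
  rw [Prod.mk_eq_zero, ZMod.intCast_zmod_eq_zero_iff_dvd]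
  exact ⟨Int.dvd_of_mul_dvd_mul_right hd hs.1, hs.2⟩

lemma exists_zmodProdIncl_eq [NeZero q] {x : ZMod (q * d) × B} (hx : q • x = 0) :
    ∃ v, zmodProdIncl q d B v = x := by
  obtain ⟨s, b⟩ := x
  obtain ⟨z, rfl⟩ := ZMod.intCast_surjective s
  have hz : ((q * z : ℤ) : ZMod (q * d)) = 0 := by simpa using congrArg Prod.fst hx
  rw [ZMod.intCast_zmod_eq_zero_iff_dvd, Nat.cast_mul] at hz
  obtain ⟨w, rfl⟩ := Int.dvd_of_mul_dvd_mul_left (Nat.cast_ne_zero.2 (NeZero.ne q)) hz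
  exact ⟨((w : ZMod q), b), by rw [zmodProdIncl_intCast, mul_comm w]⟩

lemma zmodProdRed_zmodProdIncl (hqd : q ∣ d) (w : ZMod q × B) :
    zmodProdRed q d B (zmodProdIncl q d B w) = (0, w.2) := by
  obtain ⟨s, b⟩ := w
  obtain ⟨z, rfl⟩ := ZMod.intCast_surjective s
  rw [zmodProdIncl_intCast, zmodProdRed_intCast, Int.cast_mul, Int.cast_natCast,
    (ZMod.natCast_eq_zero_iff d q).2 hqd, mul_zero]

lemma nsmul_zmod_prod_eq_zero (hB : ∀ b : B, q • b = 0) (v : ZMod q × B) : q • v = 0 := by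
  rw [Prod.ext_iff]
  exact ⟨by simp, hB v.2⟩

variable {C : Type*} [AddCommGroup C]

lemma exists_zmodProdRed_apply (hC : ∀ c : C, q • c = 0)
    (f : ZMod (q * d) × B →+ ZMod (q * d) × C) :
    ∃ fV : ZMod q × B →+ ZMod q × C, ∀ x, zmodProdRed q d C (f x) = fV (zmodProdRed q d B x) := by
  have hker : (zmodProdRed q d B).ker ≤ ((zmodProdRed q d C).comp f).ker := fun x hx => by
    obtain ⟨y, rfl⟩ := exists_nsmul_of_zmodProdRed_eq_zero hx
    rw [AddMonoidHom.mem_ker, map_nsmul, nsmul_zmod_prod_eq_zero hC]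
  refine ⟨(zmodProdRed q d B).liftOfSurjective zmodProdRed_surjective ⟨_, hker⟩, fun x => ?_⟩
  exact ((zmodProdRed q d B).liftOfRightInverse_comp_apply _ _ ⟨_, hker⟩ x).symm

lemma exists_apply_zmodProdIncl [NeZero q] [NeZero d] (hB : ∀ b : B, q • b = 0)
    (f : ZMod (q * d) × B →+ ZMod (q * d) × C) :
    ∃ fW : ZMod q × B →+ ZMod q × C, ∀ w, f (zmodProdIncl q d B w) = zmodProdIncl q d C (fW w) := by
  have hrange (w : ZMod q × B) : f (zmodProdIncl q d B w) ∈ (zmodProdIncl q d C).range :=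
    exists_zmodProdIncl_eq (by
      rw [← map_nsmul, ← map_nsmul, nsmul_zmod_prod_eq_zero hB, map_zero, map_zero])
  let toTorsion := AddMonoidHom.ofInjective (zmodProdIncl_injective (q := q) (d := d) (B := C))
  refine ⟨toTorsion.symm.toAddMonoidHom.comp
    ((f.comp (zmodProdIncl q d B)).codRestrict _ hrange), fun w => ?_⟩
  exact (congrArg Subtype.val (toTorsion.apply_symm_apply ⟨_, hrange w⟩)).symm

lemma exists_hom_lift [NeZero d] {d' : ℕ} (hqd : q ∣ d) (hqd' : q ∣ d') (hC : ∀ c : C, q • c = 0)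
    {f : ZMod (q * d) × B →+ ZMod (q * d) × C} {fV fW : ZMod q × B →+ ZMod q × C}
    (hV : ∀ x, zmodProdRed q d C (f x) = fV (zmodProdRed q d B x))
    (hW : ∀ w, f (zmodProdIncl q d B w) = zmodProdIncl q d C (fW w)) :
    ∃ f' : ZMod (q * d') × B →+ ZMod (q * d') × C,
      (∀ x, zmodProdRed q d' C (f' x) = fV (zmodProdRed q d' B x)) ∧
        ∀ w, f' (zmodProdIncl q d' B w) = zmodProdIncl q d' C (fW w) := by
  obtain ⟨s, c, hf⟩ : ∃ s c, f (1, 0) = (s, c) := ⟨_, _, rfl⟩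
  obtain ⟨z, rfl⟩ := ZMod.intCast_surjective s
  have hV₁ : fV (1, 0) = ((z : ZMod q), c) := by
    rw [← zmodProdRed_one_zero (d := d), ← hV, hf, zmodProdRed_intCast]
  have hV₂ (b : B) : fV (0, b) = (0, (fW (0, b)).2) := by
    rw [← zmodProdRed_zmodProdIncl hqd, ← hW, hV, zmodProdRed_zmodProdIncl hqd]
  have hW₁ : fW (1, 0) = ((z : ZMod q), 0) := by
    apply zmodProdIncl_injective (d := d)
    rw [← hW, zmodProdIncl_one_zero, map_nsmul, hf, nsmul_intCast_mk hqd (hC c)]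
  obtain ⟨f', hf'₁, hf'₂⟩ := exists_zmod_prod_hom (n := q * d') (a := ((z : ZMod (q * d')), c))
    (by
      rw [Prod.smul_mk, mul_comm q d', mul_smul d' q c, hC, smul_zero, mul_comm d' q, nsmul_eq_mul,
        ZMod.natCast_self, zero_mul, Prod.mk_zero_zero])
    ((zmodProdIncl q d' C).comp (fW.comp (AddMonoidHom.inr (ZMod q) B)))
  have hf'₂ (b : B) : f' (0, b) = zmodProdIncl q d' C (fW (0, b)) := hf'₂ b
  refine ⟨f', DFunLike.congr_fun (f := (zmodProdRed q d' C).comp f')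
    (g := fV.comp (zmodProdRed q d' B)) (zmod_prod_hom_ext ?_ fun b => ?_),
    DFunLike.congr_fun (f := f'.comp (zmodProdIncl q d' B))
    (g := (zmodProdIncl q d' C).comp fW) (zmod_prod_hom_ext ?_ fun b => ?_)⟩
  · simp only [AddMonoidHom.comp_apply]
    rw [hf'₁, zmodProdRed_intCast, zmodProdRed_one_zero, hV₁]
  · simp only [AddMonoidHom.comp_apply]
    rw [hf'₂, zmodProdRed_zero_left, hV₂, zmodProdRed_zmodProdIncl hqd']
  · simp only [AddMonoidHom.comp_apply]
    rw [zmodProdIncl_one_zero, map_nsmul, hf'₁, nsmul_intCast_mk hqd' (hC c), hW₁]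
  · simp only [AddMonoidHom.comp_apply]
    rw [zmodProdIncl_zero_left, hf'₂]

lemma exists_addEquiv_lift [NeZero q] [NeZero d] {d' k : ℕ} [NeZero d'] [Finite B] [Finite C]
    (hqd : q ∣ d) (hqd' : q ∣ d') (hd' : d' ∣ q ^ k) (hB : ∀ b : B, q • b = 0)
    (hC : ∀ c : C, q • c = 0) (e : ZMod (q * d) × B ≃+ ZMod (q * d) × C) :
    ∃ (e' : ZMod (q * d') × B ≃+ ZMod (q * d') × C) (fV fW : ZMod q × B →+ ZMod q × C),
      (∀ x, zmodProdRed q d C (e x) = fV (zmodProdRed q d B x)) ∧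
      (∀ w, e (zmodProdIncl q d B w) = zmodProdIncl q d C (fW w)) ∧
      (∀ x, zmodProdRed q d' C (e' x) = fV (zmodProdRed q d' B x)) ∧
        ∀ w, e' (zmodProdIncl q d' B w) = zmodProdIncl q d' C (fW w) := by
  obtain ⟨fV, hV⟩ := exists_zmodProdRed_apply hC (e : ZMod (q * d) × B →+ ZMod (q * d) × C)
  obtain ⟨fW, hW⟩ := exists_apply_zmodProdIncl hB (e : ZMod (q * d) × B →+ ZMod (q * d) × C)
  obtain ⟨f', hV', hW'⟩ := exists_hom_lift hqd hqd' hC hV hW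
  have hfW : Function.Injective fW := fun w w' h =>
    zmodProdIncl_injective (e.injective ((hW w).trans ((congrArg _ h).trans (hW w').symm)))
  have hker (x : ZMod (q * d') × B) (hx : q • x = 0) (hf : f' x = 0) : x = 0 := by
    obtain ⟨w, rfl⟩ := exists_zmodProdIncl_eq hx
    rw [hW'] at hf
    rw [(map_eq_zero_iff fW hfW).1 ((map_eq_zero_iff _ zmodProdIncl_injective).1 hf), map_zero]
  have htors (x : ZMod (q * d') × B) : ∃ k, q ^ k • x = 0 := by
    refine ⟨k + 1, Prod.ext ?_ ?_⟩
    · obtain ⟨m, hm⟩ := hd'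
      simp [pow_succ', hm, ← mul_assoc]
    · simp [pow_succ, mul_smul, hB]
  have hinj := injective_of_ker_torsion_trivial f' q htors hker
  have hcard : Nat.card (ZMod (q * d') × B) = Nat.card (ZMod (q * d') × C) := by
    have h := Nat.card_congr e.toEquiv
    rw [Nat.card_prod, Nat.card_prod] at h ⊢
    rw [Nat.eq_of_mul_eq_mul_left Nat.card_pos h]
  exact ⟨AddEquiv.ofBijective f' ((Nat.bijective_iff_injective_and_card f').2 ⟨hinj, hcard⟩),
    fV, fW, hV, hW, hV', hW'⟩

end CyclicSummand

section BracketPresentation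

variable {V W : Type*} [AddCommGroup V] [AddCommGroup W]

/-- The bracket of the Lie ring `L` factors as `L × L → V × V → W → L` through a pairing
`β : V × V → W`, a surjection `π : L → V` and an injection `ι : W → L`. The composite `δ = π ∘ ι`
is a parameter because `β` and `δ` alone determine iterated brackets. -/
structure IsBracketPresentation {L : Type*} [LieRing L] (δ : W →+ V) (β : V →+ V →+ W)
    (π : L →+ V) (ι : W →+ L) : Prop where
  surjective : Function.Surjective π
  injective : Function.Injective ι
  map_map : ∀ w, π (ι w) = δ w
  lie_eq : ∀ x y : L, ⁅x, y⁆ = ι (β (π x) (π y))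

lemma exists_isBracketPresentation {L : Type*} [LieRing L] {δ : W →+ V} {π : L →+ V} {ι : W →+ L}
    (hπ : Function.Surjective π) (hι : Function.Injective ι) (hδ : ∀ w, π (ι w) = δ w)
    (hker : ∀ x y : L, π x = 0 → ⁅x, y⁆ = 0) (hrange : ∀ x y : L, ∃ w, ι w = ⁅x, y⁆) :
    ∃ β, IsBracketPresentation δ β π ι := by
  choose b hb using hrange
  have lie_congr {x x' y y' : L} (hx : π x = π x') (hy : π y = π y') : ⁅x, y⁆ = ⁅x', y'⁆ := by
    have h₁ := hker (x - x') y (by rw [map_sub, hx, sub_self])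
    have h₂ := hker (y - y') x' (by rw [map_sub, hy, sub_self])
    rw [sub_lie, sub_eq_zero] at h₁ h₂
    rw [h₁, ← lie_skew, h₂, lie_skew]
  let σ := Function.surjInv hπ
  have hσ : ∀ v, π (σ v) = v := Function.surjInv_eq hπ
  have add_left (u u' v : V) : b (σ (u + u')) (σ v) = b (σ u) (σ v) + b (σ u') (σ v) := hι (by
    rw [map_add, hb, hb, hb, ← add_lie]
    exact lie_congr (by simp only [map_add, hσ]) rfl)
  have add_right (u v v' : V) : b (σ u) (σ (v + v')) = b (σ u) (σ v) + b (σ u) (σ v') := hι (by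
    rw [map_add, hb, hb, hb, ← lie_add]
    exact lie_congr rfl (by simp only [map_add, hσ]))
  let β : V →+ V →+ W := AddMonoidHom.mk'
    (fun u => AddMonoidHom.mk' (fun v => b (σ u) (σ v)) (add_right u))
    fun u u' => AddMonoidHom.ext (add_left u u')
  exact ⟨β, hπ, hι, hδ, fun x y => (lie_congr (hσ _).symm (hσ _).symm).trans (hb _ _).symm⟩

namespace IsBracketPresentation

variable {L : Type*} [LieRing L] {δ : W →+ V} {β : V →+ V →+ W} {π : L →+ V} {ι : W →+ L}

lemma pairing_self (h : IsBracketPresentation δ β π ι) (u : V) : β u u = 0 := by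
  obtain ⟨x, rfl⟩ := h.surjective u
  apply h.injective
  rw [← h.lie_eq, lie_self, map_zero]

lemma pairing_leibniz (h : IsBracketPresentation δ β π ι) (u v w : V) :
    β u (δ (β v w)) = β (δ (β u v)) w + β v (δ (β u w)) := by
  obtain ⟨x, rfl⟩ := h.surjective u
  obtain ⟨y, rfl⟩ := h.surjective v
  obtain ⟨z, rfl⟩ := h.surjective w
  apply h.injective
  simp only [map_add, ← h.map_map, ← h.lie_eq]
  exact leibniz_lie x y z

variable {V' W' L' : Type*} [AddCommGroup V'] [AddCommGroup W'] [LieRing L'] {δ' : W' →+ V'}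
  {β' : V' →+ V' →+ W'} {π' : L' →+ V'} {ι' : W' →+ L'}

lemma map_lie_iff (h : IsBracketPresentation δ β π ι) (h' : IsBracketPresentation δ' β' π' ι')
    {g : L →+ L'} {gV : V →+ V'} {gW : W →+ W'} (hV : ∀ x, π' (g x) = gV (π x))
    (hW : ∀ w, g (ι w) = ι' (gW w)) :
    (∀ x y, g ⁅x, y⁆ = ⁅g x, g y⁆) ↔ ∀ u v, gW (β u v) = β' (gV u) (gV v) := by
  have map_lie (x y : L) : g ⁅x, y⁆ = ι' (gW (β (π x) (π y))) := by rw [h.lie_eq, hW]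
  have lie_map (x y : L) : ⁅g x, g y⁆ = ι' (β' (gV (π x)) (gV (π y))) := by
    rw [h'.lie_eq, hV, hV]
  simp only [map_lie, lie_map, h'.injective.eq_iff, h.surjective.forall]

end IsBracketPresentation

/-- The Lie ring structure on `X` with bracket `⁅x, y⁆ = ι (β (π x) (π y))`. -/
abbrev lieRingOfPairing {X : Type*} [AddCommGroup X] {δ : W →+ V} {β : V →+ V →+ W} {π : X →+ V}
    {ι : W →+ X} (hδ : ∀ w, π (ι w) = δ w) (hself : ∀ u, β u u = 0)
    (hleibniz : ∀ u v w, β u (δ (β v w)) = β (δ (β u v)) w + β v (δ (β u w))) : LieRing X where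
  bracket x y := ι (β (π x) (π y))
  add_lie x y z := by simp only [map_add, AddMonoidHom.add_apply]
  lie_add x y z := by simp only [map_add]
  lie_self x := by rw [hself, map_zero]
  leibniz_lie x y z := by
    change ι (β _ (π (ι _))) = ι (β (π (ι _)) _) + ι (β _ (π (ι _)))
    rw [hδ, hδ, hδ, hleibniz, map_add]

/-- The lower central series, from its second term on, of any Lie ring presented by `δ` and `β`,
as subgroups of `W`. -/
def pairingLCS (δ : W →+ V) (β : V →+ V →+ W) : ℕ → AddSubgroup W
  | 0 => AddSubgroup.closure {w | ∃ u v, w = β u v}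
  | k + 1 => AddSubgroup.closure {w | ∃ w' ∈ pairingLCS δ β k, ∃ v, w = β (δ w') v}

variable {L L' : Type} [LieRing L] [LieRing L'] {δ : W →+ V} {β : V →+ V →+ W} {π : L →+ V}
  {ι : W →+ L} {π' : L' →+ V} {ι' : W →+ L'}

lemma IsBracketPresentation.lieLCS_succ (h : IsBracketPresentation δ β π ι) (k : ℕ) :
    lieLCS L (k + 1) = (pairingLCS δ β k).map ι := by
  induction k with
  | zero =>
    rw [pairingLCS, AddMonoidHom.map_closure, lieLCS]
    congr 1
    ext x
    simp only [lieLCS, AddSubgroup.mem_top, true_and, Set.mem_ofPred_eq, Set.mem_image, h.lie_eq]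
    constructor
    · rintro ⟨y, z, rfl⟩
      exact ⟨_, ⟨π y, π z, rfl⟩, rfl⟩
    · rintro ⟨_, ⟨u, v, rfl⟩, rfl⟩
      obtain ⟨y, rfl⟩ := h.surjective u
      obtain ⟨z, rfl⟩ := h.surjective v
      exact ⟨y, z, rfl⟩
  | succ k ih =>
    rw [pairingLCS, AddMonoidHom.map_closure, lieLCS, ih]
    congr 1
    ext x
    simp only [Set.mem_ofPred_eq, Set.mem_image, h.lie_eq]
    constructor
    · rintro ⟨_, ⟨w, hw, rfl⟩, z, rfl⟩
      exact ⟨_, ⟨w, hw, π z, rfl⟩, by rw [h.map_map]⟩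
    · rintro ⟨_, ⟨w, hw, v, rfl⟩, rfl⟩
      obtain ⟨z, rfl⟩ := h.surjective v
      exact ⟨ι w, ⟨w, hw, rfl⟩, z, by rw [h.map_map]⟩

lemma IsBracketPresentation.lieLCS_zero_ne_bot [Nontrivial V] (h : IsBracketPresentation δ β π ι) :
    lieLCS L 0 ≠ ⊥ := by
  have := h.surjective.nontrivial
  exact top_ne_bot

lemma IsBracketPresentation.lieLCS_eq_bot_iff [Nontrivial V] (h : IsBracketPresentation δ β π ι)
    (h' : IsBracketPresentation δ β π' ι') (k : ℕ) : lieLCS L k = ⊥ ↔ lieLCS L' k = ⊥ := by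
  cases k with
  | zero => exact iff_of_false h.lieLCS_zero_ne_bot h'.lieLCS_zero_ne_bot
  | succ k =>
    rw [h.lieLCS_succ, h'.lieLCS_succ, AddSubgroup.map_eq_bot_iff_of_injective _ h.injective,
      AddSubgroup.map_eq_bot_iff_of_injective _ h'.injective]

end BracketPresentation

section CyclicModel

/-- `L` has additive group `ℤ/qd × B`, and its bracket factors through the reduction onto `ℤ/q × B`,
the pairing `β`, and the inclusion of the `q`-torsion `ℤ/q × B`. When `q ∣ d` the composite of that
inclusion with the reduction is `(s, b) ↦ (0, b)`, which no longer involves `d`. -/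
def HasCyclicModel (q d : ℕ) {B : Type*} [AddCommGroup B]
    (β : ZMod q × B →+ ZMod q × B →+ ZMod q × B) (L : Type*) [LieRing L] : Prop :=
  ∃ e : L ≃+ ZMod (q * d) × B,
    IsBracketPresentation ((AddMonoidHom.inr (ZMod q) B).comp (AddMonoidHom.snd (ZMod q) B)) β
      ((zmodProdRed q d B).comp (e : L →+ ZMod (q * d) × B))
      ((e.symm : ZMod (q * d) × B →+ L).comp (zmodProdIncl q d B))

/-- Isomorphism of Lie rings. -/
def LieRingIsomorphic (L L' : Type*) [LieRing L] [LieRing L'] : Prop :=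
  ∃ e : L ≃+ L', ∀ x y : L, e ⁅x, y⁆ = ⁅e x, e y⁆

variable {q d d' : ℕ} {B C : Type*} [AddCommGroup B] [AddCommGroup C]

lemma nsmul_lie_eq_zero_of_addEquiv {L : Type*} [LieRing L] {n : ℕ} (hB : ∀ b : B, q • b = 0)
    (e : L ≃+ ZMod n × B) (x y : L) : q • ⁅x, y⁆ = 0 := by
  have decompose (x : L) : ∃ (z : ℤ) (b : L), x = z • e.symm (1, 0) + b ∧ q • b = 0 := by
    obtain ⟨⟨s, b⟩, rfl⟩ := e.symm.surjective x
    obtain ⟨z, rfl⟩ := ZMod.intCast_surjective s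
    refine ⟨z, e.symm (0, b), ?_, ?_⟩
    · rw [← map_zsmul, ← map_add]
      simp
    · rw [← map_nsmul, Prod.smul_mk, hB, smul_zero, Prod.mk_zero_zero, map_zero]
  obtain ⟨z, b, rfl, hb⟩ := decompose x
  obtain ⟨w, b', rfl, hb'⟩ := decompose y
  rw [add_lie, smul_add, ← nsmul_lie b, hb, zero_lie, add_zero, lie_add, smul_add, ← lie_nsmul _ b',
    hb', lie_zero, add_zero, zsmul_lie, lie_zsmul, lie_self, smul_zero, smul_zero, smul_zero]

lemma exists_hasCyclicModel [NeZero q] [NeZero d] {L : Type*} [LieRing L] (hqd : q ∣ d)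
    (hB : ∀ b : B, q • b = 0) (e : L ≃+ ZMod (q * d) × B) :
    ∃ β : ZMod q × B →+ ZMod q × B →+ ZMod q × B, HasCyclicModel q d β L := by
  let π : L →+ ZMod q × B := (zmodProdRed q d B).comp (e : L →+ ZMod (q * d) × B)
  let ι : ZMod q × B →+ L := (e.symm : ZMod (q * d) × B →+ L).comp (zmodProdIncl q d B)
  have hlie := nsmul_lie_eq_zero_of_addEquiv hB e
  have hδ (w : ZMod q × B) : π (ι w) = (0, w.2) :=
    (congrArg _ (e.apply_symm_apply _)).trans (zmodProdRed_zmodProdIncl hqd w)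
  have hker (x y : L) (hx : π x = 0) : ⁅x, y⁆ = 0 := by
    obtain ⟨z, hz⟩ := exists_nsmul_of_zmodProdRed_eq_zero hx
    have hxz : x = q • e.symm z := by rw [← map_nsmul, e.eq_symm_apply]; exact hz
    rw [hxz, nsmul_lie, hlie]
  have hrange (x y : L) : ∃ w, ι w = ⁅x, y⁆ := by
    obtain ⟨w, hw⟩ := exists_zmodProdIncl_eq (x := e ⁅x, y⁆) (by rw [← map_nsmul, hlie, map_zero])
    exact ⟨w, e.symm_apply_eq.2 hw⟩
  obtain ⟨β, hβ⟩ := exists_isBracketPresentation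
    (δ := (AddMonoidHom.inr (ZMod q) B).comp (AddMonoidHom.snd (ZMod q) B))
    (zmodProdRed_surjective.comp e.surjective) (e.symm.injective.comp zmodProdIncl_injective)
    hδ hker hrange
  exact ⟨β, e, hβ⟩

variable {β : ZMod q × B →+ ZMod q × B →+ ZMod q × B} {γ : ZMod q × C →+ ZMod q × C →+ ZMod q × C}

namespace HasCyclicModel

lemma exists_lieRing [NeZero d'] {L : Type*} [LieRing L] (h : HasCyclicModel q d β L)
    (hqd' : q ∣ d') {X : Type*} (g : X ≃ ZMod (q * d') × B) :
    ∃ s : LieRing X, letI := s; HasCyclicModel q d' β X := by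
  obtain ⟨e, he⟩ := h
  let : AddCommGroup X := g.addCommGroup
  let g' : X ≃+ ZMod (q * d') × B := { g with map_add' := fun _ _ => g.apply_symm_apply _ }
  let π : X →+ ZMod q × B := (zmodProdRed q d' B).comp (g' : X →+ ZMod (q * d') × B)
  let ι : ZMod q × B →+ X := (g'.symm : ZMod (q * d') × B →+ X).comp (zmodProdIncl q d' B)
  have hδ (w : ZMod q × B) : π (ι w) = (0, w.2) :=
    (congrArg _ (g'.apply_symm_apply _)).trans (zmodProdRed_zmodProdIncl hqd' w)
  let s : LieRing X := lieRingOfPairing hδ he.pairing_self he.pairing_leibniz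
  exact ⟨s, g', zmodProdRed_surjective.comp g'.surjective,
    g'.symm.injective.comp zmodProdIncl_injective, hδ, fun _ _ => rfl⟩

lemma lieRingIsomorphic [NeZero q] [NeZero d] [NeZero d'] [Finite B] [Finite C] {k : ℕ}
    (hqd : q ∣ d) (hqd' : q ∣ d') (hd' : d' ∣ q ^ k) (hB : ∀ b : B, q • b = 0)
    (hC : ∀ c : C, q • c = 0) {L M L' M' : Type*} [LieRing L] [LieRing M] [LieRing L']
    [LieRing M'] (hL : HasCyclicModel q d β L) (hM : HasCyclicModel q d γ M)
    (hL' : HasCyclicModel q d' β L') (hM' : HasCyclicModel q d' γ M')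
    (hLM : LieRingIsomorphic L M) : LieRingIsomorphic L' M' := by
  obtain ⟨g, hg⟩ := hLM
  obtain ⟨eL, hL⟩ := hL
  obtain ⟨eM, hM⟩ := hM
  obtain ⟨eL', hL'⟩ := hL'
  obtain ⟨eM', hM'⟩ := hM'
  obtain ⟨e', fV, fW, hV, hW, hV', hW'⟩ :=
    exists_addEquiv_lift hqd hqd' hd' hB hC (eL.symm.trans (g.trans eM))
  have hβγ := (hL.map_lie_iff hM (g := (g : L →+ M)) (gV := fV) (gW := fW)
    (fun x => by simpa using hV (eL x))
    (fun w => eM.injective (by simpa using hW w))).1 hg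
  exact ⟨eL'.trans (e'.trans eM'.symm), (hL'.map_lie_iff hM'
    (g := ((eL'.trans (e'.trans eM'.symm) : L' ≃+ M') : L' →+ M')) (gV := fV) (gW := fW)
    (fun x => by simpa using hV' (eL' x)) (fun w => by simpa using hW' w)).2 hβγ⟩

lemma lieLCS_eq_bot_iff [Nontrivial (ZMod q)] {L L' : Type} [LieRing L] [LieRing L']
    (h : HasCyclicModel q d β L) (h' : HasCyclicModel q d' β L') (k : ℕ) :
    lieLCS L k = ⊥ ↔ lieLCS L' k = ⊥ := by
  obtain ⟨e, h⟩ := h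
  obtain ⟨e', h'⟩ := h'
  exact h.lieLCS_eq_bot_iff h' k

end HasCyclicModel

end CyclicModel

section PGroup

variable {p c l f j j' : ℕ} {ls : List ℕ} {L L' M M' : Type} {_ : LieRing L} {_ : LieRing L'}
  {_ : LieRing M} {_ : LieRing M'}

lemma nonempty_aOmega_addEquiv [NeZero p] {d : ℕ} [NeZero d] {A B : Type} [AddCommGroup A]
    [AddCommGroup B] (hB : ∀ b : B, p ^ l • b = 0) (e : A ≃+ ZMod (p ^ l * d) × B) :
    Nonempty (aOmega p A l ≃+ ZMod (p ^ l) × B) := by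
  let f := ((e.symm : ZMod (p ^ l * d) × B →+ A).comp (zmodProdIncl (p ^ l) d B)).codRestrict
    (aOmega p A l) fun w => by
      rw [mem_aOmega, ← map_nsmul, nsmul_zmod_prod_eq_zero hB, map_zero]
  refine ⟨(AddEquiv.ofBijective f ⟨fun w w' h => ?_, fun ⟨x, hx⟩ => ?_⟩).symm⟩
  · exact zmodProdIncl_injective (e.symm.injective (congrArg Subtype.val h))
  · rw [mem_aOmega] at hx
    obtain ⟨w, hw⟩ := exists_zmodProdIncl_eq (x := e x) (by rw [← map_nsmul, hx, map_zero])
    exact ⟨w, Subtype.ext (e.symm_apply_eq.2 hw)⟩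

/-- `L` is nilpotent of class `c`, with `μ₂(L) = l` and `Ω_l(L)` of type `ls`. -/
def HasClassAndType (p c l : ℕ) (ls : List ℕ) (L : Type) [LieRing L] : Prop :=
  IsNilpotentLieRing L ∧ lieNilClass L = c ∧ aMuInv p L 2 = l ∧
    aHasType p (aOmega p L (aMuInv p L 2)) ls

/-- `L` and `L'` arise from the same pairing on `ℤ/p^l × B`, where `B` has order `p^f` and exponent
`p^l`; they have orders `p^(l+j+f)` and `p^(l+j'+f)`. -/
def HaveCommonPairing (p l f j j' : ℕ) (L L' : Type) [LieRing L] [LieRing L'] : Prop :=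
  ∃ (B : Type) (_ : AddCommGroup B) (β : ZMod (p ^ l) × B →+ ZMod (p ^ l) × B →+ ZMod (p ^ l) × B),
    Nat.card B = p ^ f ∧ AddMonoid.exponent B = p ^ l ∧
      HasCyclicModel (p ^ l) (p ^ j) β L ∧ HasCyclicModel (p ^ l) (p ^ j') β L'

lemma HaveCommonPairing.symm (h : HaveCommonPairing p l f j j' L L') :
    HaveCommonPairing p l f j' j L' L := by
  obtain ⟨B, _, β, hcard, hexp, hL, hL'⟩ := h
  exact ⟨B, _, β, hcard, hexp, hL', hL⟩

variable [Fact p.Prime]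

lemma exists_addEquiv_zmod_prod {A : Type} [AddCommGroup A] [Nontrivial A] {n : ℕ}
    (hA : Nat.card A = p ^ n) : ∃ (m : ℕ) (B : Type) (_ : AddCommGroup B),
      AddMonoid.exponent B ∣ p ^ m ∧ Nonempty (A ≃+ ZMod (p ^ m) × B) := by
  classical
  have hp : p.Prime := Fact.out
  have : Finite A := Nat.finite_of_card_ne_zero (hA ▸ NeZero.ne _)
  obtain ⟨ι, _, q, -, ⟨e⟩⟩ := AddCommGroup.equiv_directSum_zmod_of_finite' A
  let e := e.trans (DirectSum.addEquivProd _)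
  have hcard : p ^ n = ∏ i, q i := by
    rw [← hA, Nat.card_congr e.toEquiv, Nat.card_pi]
    simp only [Nat.card_zmod]
  have hpow (i : ι) : ∃ k, q i = p ^ k := by
    obtain ⟨k, -, hk⟩ :=
      (Nat.dvd_prime_pow hp).1 (hcard ▸ Finset.dvd_prod_of_mem q (Finset.mem_univ i))
    exact ⟨k, hk⟩
  choose k hk using hpow
  obtain rfl : q = fun i => p ^ k i := funext hk
  have : Nonempty ι := by
    by_contra hι
    rw [not_nonempty_iff] at hι
    exact not_subsingleton A e.toEquiv.subsingleton
  obtain ⟨i₀, hi₀⟩ := Finite.exists_max k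
  refine ⟨k i₀, ∀ i : {i // i ≠ i₀}, ZMod (p ^ k i), inferInstance, ?_,
    ⟨e.trans { Equiv.piSplitAt i₀ (fun i => ZMod (p ^ k i)) with map_add' := fun _ _ => rfl }⟩⟩
  refine AddMonoid.exponent_dvd_of_forall_nsmul_eq_zero fun b => funext fun i => ?_
  rw [Pi.smul_apply, nsmul_eq_mul, (ZMod.natCast_eq_zero_iff _ _).2 (pow_dvd_pow p (hi₀ i)),
    zero_mul, Pi.zero_apply]

lemma exists_addEquiv_of_aHasType {A : Type} [AddCommGroup A] (hl : l ≠ 0)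
    (hA : Nat.card A = p ^ (l + j + ls.sum)) (hmu : aMuInv p A 2 = l)
    (htype : aHasType p (aOmega p A l) (l :: ls)) : ∃ (B : Type) (_ : AddCommGroup B),
      Nat.card B = p ^ ls.sum ∧ AddMonoid.exponent B = p ^ l ∧
        Nonempty (A ≃+ ZMod (p ^ l * p ^ j) × B) := by
  have hp : p.Prime := Fact.out
  have : Finite A := Nat.finite_of_card_ne_zero (hA ▸ NeZero.ne _)
  have : Nontrivial A :=
    Finite.one_lt_card_iff_nontrivial.1 (hA ▸ Nat.one_lt_pow (by omega) hp.one_lt)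
  obtain ⟨m, B, _, hexp, ⟨e⟩⟩ := exists_addEquiv_zmod_prod hA
  have hcard : p ^ (l + j + ls.sum) = p ^ m * Nat.card B := by
    rw [← hA, Nat.card_congr e.toEquiv, Nat.card_prod, Nat.card_zmod]
  obtain ⟨f, -, hf⟩ := (Nat.dvd_prime_pow hp).1 (Dvd.intro_left _ hcard.symm)
  obtain ⟨k, hkm, hk⟩ := (Nat.dvd_prime_pow hp).1 hexp
  obtain rfl : k = l := by rw [← hmu, aMuInv_congr e, aMuInv_two_zmod_prod hf hk hkm]
  obtain ⟨i, rfl⟩ := Nat.exists_eq_add_of_le hkm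
  rw [pow_add] at e
  have hsum : k + ls.sum = k + f := by
    obtain ⟨g⟩ := nonempty_aOmega_addEquiv
      (AddMonoid.exponent_dvd_iff_forall_nsmul_eq_zero.1 hk.dvd) e
    refine sum_eq_of_aHasType ?_ htype
    rw [Nat.card_congr g.toEquiv, Nat.card_prod, Nat.card_zmod, hf, pow_add]
  rw [hf, ← pow_add] at hcard
  have hexponents := Nat.pow_right_injective hp.two_le hcard
  obtain ⟨rfl, rfl⟩ : i = j ∧ f = ls.sum := by omega
  exact ⟨B, _, hf, hk, ⟨e⟩⟩

lemma HasCyclicModel.aMuInv_two {B : Type} [AddCommGroup B]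
    {β : ZMod (p ^ l) × B →+ ZMod (p ^ l) × B →+ ZMod (p ^ l) × B}
    (h : HasCyclicModel (p ^ l) (p ^ j) β L) (hcard : Nat.card B = p ^ f)
    (hexp : AddMonoid.exponent B = p ^ l) : aMuInv p L 2 = l := by
  have : Finite B := Nat.finite_of_card_ne_zero (hcard ▸ NeZero.ne _)
  obtain ⟨e, -⟩ := h
  rw [← pow_add] at e
  have : Finite L := Finite.of_equiv _ e.symm.toEquiv
  rw [aMuInv_congr e, aMuInv_two_zmod_prod hcard hexp (Nat.le_add_right l j)]

lemma HaveCommonPairing.hasClassAndType (h : HaveCommonPairing p l f j j' L L') (hl : l ≠ 0)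
    (hL : HasClassAndType p c l ls L) : HasClassAndType p c l ls L' := by
  obtain ⟨B, _, β, hcard, hexp, hβ, hβ'⟩ := h
  have : Fact (1 < p ^ l) := ⟨Nat.one_lt_pow hl (Fact.out : p.Prime).one_lt⟩
  have hbot := hβ.lieLCS_eq_bot_iff hβ'
  have hB := AddMonoid.exponent_dvd_iff_forall_nsmul_eq_zero.1 hexp.dvd
  have hmu' := hβ'.aMuInv_two hcard hexp
  obtain ⟨⟨k, hk⟩, hclass, hmu, htype⟩ := hL
  obtain ⟨⟨e, -⟩, ⟨e', -⟩⟩ := And.intro hβ hβ'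
  obtain ⟨g⟩ := nonempty_aOmega_addEquiv hB e
  obtain ⟨g'⟩ := nonempty_aOmega_addEquiv hB e'
  have : Finite B := Nat.finite_of_card_ne_zero (hcard ▸ NeZero.ne _)
  have : Finite (aOmega p L l) := Finite.of_equiv _ g.symm.toEquiv
  refine ⟨⟨k, (hbot k).1 hk⟩, ?_, hmu', ?_⟩
  · simpa only [lieNilClass, hbot] using hclass
  · rw [hmu] at htype
    rw [hmu']
    exact (aHasType_congr (g.trans g'.symm) ls).1 htype

lemma HasClassAndType.exists_haveCommonPairing (hl : l ≠ 0) (hj : l ≤ j) (hj' : l ≤ j')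
    (hcard : Nat.card L = p ^ (l + j + ls.sum)) (hL : HasClassAndType p c l (l :: ls) L) :
    ∃ s : LieRing (Fin (p ^ (l + j' + ls.sum))),
      letI := s
      HasClassAndType p c l (l :: ls) (Fin (p ^ (l + j' + ls.sum))) ∧
        HaveCommonPairing p l ls.sum j j' L (Fin (p ^ (l + j' + ls.sum))) := by
  obtain ⟨-, -, hmu, htype⟩ := id hL
  rw [hmu] at htype
  obtain ⟨B, _, hB, hexp, ⟨e⟩⟩ := exists_addEquiv_of_aHasType hl hcard hmu htype
  obtain ⟨β, hβ⟩ := exists_hasCyclicModel (pow_dvd_pow p hj)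
    (AddMonoid.exponent_dvd_iff_forall_nsmul_eq_zero.1 hexp.dvd) e
  have : Finite B := Nat.finite_of_card_ne_zero (hB ▸ NeZero.ne _)
  have hcard' : Nat.card (ZMod (p ^ l * p ^ j') × B) = p ^ (l + j' + ls.sum) := by
    rw [Nat.card_prod, Nat.card_zmod, hB, pow_add, pow_add]
  obtain ⟨s, hs⟩ := hβ.exists_lieRing (pow_dvd_pow p hj') (Finite.equivFinOfCardEq hcard').symm
  have hpair : HaveCommonPairing p l ls.sum j j' L (Fin (p ^ (l + j' + ls.sum))) :=
    ⟨B, _, β, hB, hexp, hβ, hs⟩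
  exact ⟨s, hpair.hasClassAndType hl hL, hpair⟩

lemma HaveCommonPairing.lieRingIsomorphic (hl : l ≠ 0) (hj : l ≤ j) (hj' : l ≤ j')
    (hL : HaveCommonPairing p l f j j' L L') (hM : HaveCommonPairing p l f j j' M M')
    (hLM : LieRingIsomorphic L M) : LieRingIsomorphic L' M' := by
  obtain ⟨B, _, β, hcardB, hexpB, hL, hL'⟩ := hL
  obtain ⟨C, _, γ, hcardC, hexpC, hM, hM'⟩ := hM
  have : Finite B := Nat.finite_of_card_ne_zero (hcardB ▸ NeZero.ne _)
  have : Finite C := Nat.finite_of_card_ne_zero (hcardC ▸ NeZero.ne _)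
  have hdvd : p ^ j' ∣ (p ^ l) ^ j' := pow_dvd_pow_of_dvd (dvd_pow_self p hl) j'
  exact hL.lieRingIsomorphic (pow_dvd_pow p hj) (pow_dvd_pow p hj') hdvd
    (AddMonoid.exponent_dvd_iff_forall_nsmul_eq_zero.1 hexpB.dvd)
    (AddMonoid.exponent_dvd_iff_forall_nsmul_eq_zero.1 hexpC.dvd) hM hL' hM' hLM

end PGroup

/-- Let `p` be a prime, `(λ₁, ..., λ_k)` a partition of `f` with
`λ₁ ≥ ... ≥ λ_k`, and `n ≥ f + 2λ₁`.  For every positive integer `c` the number of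
isomorphism classes of nilpotent Lie rings `L` of order `p ^ n` of class exactly `c` with
`μ_2(L) = λ₁` and `Ω_{μ_2(L)}(L)` of type invariants `(λ₁, λ₁, λ₂, ..., λ_k)` is
independent of `n`. -/
theorem stmt12_count_stable (p : ℕ) (hp : p.Prime) (f : ℕ)
    (lam1 : ℕ) (rest : List ℕ)
    (hsort : List.Pairwise (· ≥ ·) (lam1 :: rest))
    (hpos : ∀ x ∈ lam1 :: rest, 0 < x)
    (hsum : (lam1 :: rest).sum = f)
    (c : ℕ) (hc : 0 < c)
    (n n' : ℕ) (hn : f + 2 * lam1 ≤ n) (hn' : f + 2 * lam1 ≤ n') :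
    stmt12Count p n c lam1 rest = stmt12Count p n' c lam1 rest := by
  have : Fact p.Prime := ⟨hp⟩
  have hl : lam1 ≠ 0 := (hpos lam1 List.mem_cons_self).ne'
  subst hsum
  obtain ⟨j, hj, rfl⟩ : ∃ j, lam1 ≤ j ∧ n = lam1 + j + (lam1 :: rest).sum :=
    ⟨n - lam1 - (lam1 :: rest).sum, by omega, by omega⟩
  obtain ⟨j', hj', rfl⟩ : ∃ j', lam1 ≤ j' ∧ n' = lam1 + j' + (lam1 :: rest).sum :=
    ⟨n' - lam1 - (lam1 :: rest).sum, by omega, by omega⟩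
  refine card_quot_eq_of_correspondence (fun s t =>
    @HaveCommonPairing p lam1 (lam1 :: rest).sum j j' _ _ s.1 t.1)
    (fun s => ⟨@AddEquiv.refl _ (addOfLieRing _ s.1), fun _ _ => rfl⟩)
    (fun t => ⟨@AddEquiv.refl _ (addOfLieRing _ t.1), fun _ _ => rfl⟩) ?_ ?_ ?_
  · rintro ⟨s, hs⟩
    obtain ⟨t, ht, hst⟩ := HasClassAndType.exists_haveCommonPairing hl hj hj' (Nat.card_fin _) hs
    exact ⟨⟨t, ht⟩, hst⟩
  · rintro ⟨t, ht⟩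
    obtain ⟨s, hs, hts⟩ := HasClassAndType.exists_haveCommonPairing hl hj' hj (Nat.card_fin _) ht
    exact ⟨⟨s, hs⟩, hts.symm⟩
  · rintro ⟨s, _⟩ ⟨s', _⟩ ⟨t, _⟩ ⟨t', _⟩ hst hst'
    exact ⟨hst.lieRingIsomorphic hl hj hj' hst', hst.symm.lieRingIsomorphic hl hj' hj hst'.symm⟩
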